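/- Let (X,d,μ) be a metric measure space satisfying RCD*(K,N) for some K∈ℝ and N∈[1,∞). Then for any 1<p<∞, the Sobolev space W^{1,p}(X) coincides with W^{1,p}_0(X), i.e., Lipschitz functions with compact support in X are dense in W^{1,p}(X) with respect to the W^{1,p}-norm. -/

import Mathlib

open MeasureTheory Metric Set Filter Function
open scoped ENNReal NNReal

noncomputable section

/-! ### Basic nonsmooth calculus on metric measure spaces -/

/-- The pointwise Lipschitz constant `Lip f (x) = limsup_{y → x} |f y - f x| / d(x,y)`
of a real-valued function on a metric space. -/
def lipConst {X : Type*} [MetricSpace X] (f : X → ℝ) (x : X) : ℝ :=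
  limsup (fun y => |f y - f x| / dist y x) (nhdsWithin x {x}ᶜ)

/-- The Cheeger energy `Ch(f) = inf { liminf_j (1/2)∫ (Lip f_j)² dμ }`, the infimum being
taken over all sequences of Lipschitz functions `f_j` converging to `f` in `L²(X, μ)`. -/
def cheegerEnergy {X : Type*} [MetricSpace X] [MeasurableSpace X] (μ : Measure X)
    (f : X → ℝ) : ℝ≥0∞ :=
  ⨅ (F : ℕ → X → ℝ) (_ : ∀ j, ∃ L, LipschitzWith L (F j))
    (_ : Tendsto (fun j => eLpNorm (F j - f) 2 μ) atTop (nhds 0)),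
      liminf (fun j => (∫⁻ x, ENNReal.ofReal ((lipConst (F j) x) ^ 2) ∂μ) / 2) atTop

/-- `x` is a point of approximate continuity of `h` (w.r.t. the measure `μ`). -/
def ApproxContinuityPt {X : Type*} [MetricSpace X] [MeasurableSpace X] (μ : Measure X)
    (h : X → ℝ) (x : X) : Prop :=
  ∀ δ : ℝ, 0 < δ →
    Tendsto (fun r : ℝ => μ ({y ∈ ball x r | δ < |h y - h x|}) / μ (ball x r))
      (nhdsWithin 0 (Ioi 0)) (nhds 0)

/-- Membership in the Sobolev space `W^{1,p}(X)`: `f` is an `L^p`-limit of locally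
Lipschitz functions with finite `W^{1,p}`-norm which form a Cauchy sequence in the
`W^{1,p}`-norm `‖·‖_{L^p} + ‖Lip ·‖_{L^p}`. -/
def MemW1p {X : Type*} [MetricSpace X] [MeasurableSpace X] (μ : Measure X)
    (p : ℝ≥0∞) (f : X → ℝ) : Prop :=
  ∃ F : ℕ → X → ℝ,
    (∀ j, LocallyLipschitz (F j) ∧ MemLp (F j) p μ ∧ MemLp (lipConst (F j)) p μ) ∧
    Tendsto (fun j => eLpNorm (F j - f) p μ) atTop (nhds 0) ∧
    ∀ ε : ℝ, 0 < ε → ∃ J : ℕ, ∀ j ≥ J, ∀ k ≥ J,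
      eLpNorm (F j - F k) p μ + eLpNorm (lipConst (F j - F k)) p μ < ENNReal.ofReal ε

/-- An abstract first-order Sobolev calculus on the metric measure space `(X, d, μ)`:
for every open subset `Ω ⊆ X` it records the Sobolev space `H¹(Ω) = W^{1,2}(Ω)`
(as a set of functions), the subspace `H¹₀(Ω)` (the closure of the compactly supported
Lipschitz functions in the `W^{1,2}(Ω)`-norm), and the carré du champ
`Γ Ω f g = ⟨∇f, ∇g⟩` (the pointwise inner product of minimal relaxed gradients,
obtained by polarization), together with its basic structural properties. -/
structure SobolevCalculus (X : Type*) [MetricSpace X] [MeasurableSpace X]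
    (μ : Measure X) where
  /-- the Sobolev space `H¹(Ω) = W^{1,2}(Ω)` -/
  H1 : Set X → Set (X → ℝ)
  /-- the Sobolev space `H¹₀(Ω) = W^{1,2}₀(Ω)` -/
  H10 : Set X → Set (X → ℝ)
  /-- the carré du champ `Γ Ω f g = ⟨∇f, ∇g⟩` on `Ω` -/
  Γ : Set X → (X → ℝ) → (X → ℝ) → X → ℝ
  H10_subset_H1 : ∀ Ω, H10 Ω ⊆ H1 Ω
  /-- Lipschitz functions with compact support contained in `Ω` belong to `H¹₀(Ω)`. -/
  lip_mem_H10 : ∀ (Ω : Set X) (f : X → ℝ), (∃ L, LipschitzWith L f) →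
    IsCompact (tsupport f) → tsupport f ⊆ Ω → f ∈ H10 Ω
  Γ_symm : ∀ Ω f g, Γ Ω f g = Γ Ω g f
  Γ_add_left : ∀ Ω f₁ f₂ g, f₁ ∈ H1 Ω → f₂ ∈ H1 Ω →
    Γ Ω (f₁ + f₂) g = Γ Ω f₁ g + Γ Ω f₂ g
  Γ_smul_left : ∀ (Ω) (c : ℝ) (f g), Γ Ω (c • f) g = c • Γ Ω f g
  Γ_nonneg : ∀ Ω f x, 0 ≤ Γ Ω f f x
  /-- Cauchy–Schwarz inequality for the carré du champ. -/
  Γ_sq_le : ∀ Ω f g x, (Γ Ω f g x) ^ 2 ≤ Γ Ω f f x * Γ Ω g g x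
  Γ_measurable : ∀ Ω f g, Measurable (Γ Ω f g)
  Γ_integrableOn : ∀ Ω f g, f ∈ H1 Ω → g ∈ H1 Ω → IntegrableOn (Γ Ω f g) Ω μ
  /-- locality: the carré du champ on a smaller open set is the restriction. -/
  Γ_loc : ∀ Ω Ω' f g, Ω' ⊆ Ω → ∀ x ∈ Ω', Γ Ω f g x = Γ Ω' f g x
  mem_L2 : ∀ Ω f, f ∈ H1 Ω → MemLp f 2 (μ.restrict Ω)

namespace SobolevCalculus

variable {X : Type*} [MetricSpace X] [MeasurableSpace X] {μ : Measure X}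

/-- `|∇f|²`, the square of the minimal relaxed gradient of `f` on `Ω`. -/
def gradSq (S : SobolevCalculus X μ) (Ω : Set X) (f : X → ℝ) : X → ℝ :=
  S.Γ Ω f f

/-- Test functions for the weak Laplacian on `Ω`: elements of `H¹₀(Ω) ∩ L^∞(Ω)`. -/
def TestFun (S : SobolevCalculus X μ) (Ω : Set X) (φ : X → ℝ) : Prop :=
  φ ∈ S.H10 Ω ∧ MemLp φ ⊤ (μ.restrict Ω)

/-- The value `ℒf(φ) = −∫_Ω ⟨∇f, ∇φ⟩ dμ` of the weak Laplacian of `f` on `Ω` at `φ`. -/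
def lapVal (S : SobolevCalculus X μ) (Ω : Set X) (f φ : X → ℝ) : ℝ :=
  -∫ x in Ω, S.Γ Ω f φ x ∂μ

/-- `ℒ f = g` on `Ω` in the sense of distributions:
`ℒf(φ) = ∫_Ω g·φ dμ` for all `φ ∈ H¹₀(Ω) ∩ L^∞(Ω)`. -/
def IsLap (S : SobolevCalculus X μ) (Ω : Set X) (f g : X → ℝ) : Prop :=
  ∀ φ, S.TestFun Ω φ → S.lapVal Ω f φ = ∫ x in Ω, g x * φ x ∂μ

/-- `ℒ f` is, on `Ω`, the signed Radon measure `ν = νpos − νneg` (given by its Jordan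
decomposition into two measures which are finite on compact sets):
`ℒf(φ) = ∫ φ dνpos − ∫ φ dνneg` for all `φ ∈ H¹₀(Ω) ∩ L^∞(Ω)`. -/
def IsLapMeasure (S : SobolevCalculus X μ) (Ω : Set X) (f : X → ℝ)
    (νpos νneg : Measure X) : Prop :=
  (∀ K : Set X, IsCompact K → νpos K < ⊤ ∧ νneg K < ⊤) ∧
  ∀ φ, S.TestFun Ω φ → S.lapVal Ω f φ = (∫ x, φ x ∂νpos) - ∫ x, φ x ∂νneg

/-- `ℒ f` is, on `Ω`, a signed Radon measure whose Radon–Nikodym decomposition with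
respect to `μ` is `ℒf = ℓ·μ + σpos − σneg`, with absolutely continuous part `ℒ^ac f = ℓ`
and singular part `ℒ^sing f = σpos − σneg` (both `σpos, σneg` are Radon and singular
with respect to `μ`). -/
def HasLapDecomp (S : SobolevCalculus X μ) (Ω : Set X) (f ℓ : X → ℝ)
    (σpos σneg : Measure X) : Prop :=
  σpos.MutuallySingular μ ∧ σneg.MutuallySingular μ ∧
  (∀ K : Set X, IsCompact K → σpos K < ⊤ ∧ σneg K < ⊤) ∧
  IntegrableOn ℓ Ω μ ∧
  ∀ φ, S.TestFun Ω φ →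
    S.lapVal Ω f φ = (∫ x in Ω, ℓ x * φ x ∂μ) + (∫ x, φ x ∂σpos) - ∫ x, φ x ∂σneg

/-- The value `ℒ_w f(φ) = −∫_Ω ⟨∇f, ∇φ⟩ dμ_w` of the weighted Laplacian (with respect to
the weighted measure `μ_w = e^w·μ`) of `f` on `Ω` at `φ`. -/
def wLapVal (S : SobolevCalculus X μ) (Ω : Set X) (w f φ : X → ℝ) : ℝ :=
  -∫ x in Ω, S.Γ Ω f φ x * Real.exp (w x) ∂μ

/-- `ℒ_w f` is, on `Ω`, the signed Radon measure `ν = νpos − νneg`. -/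
def IsWLapMeasure (S : SobolevCalculus X μ) (Ω : Set X) (w f : X → ℝ)
    (νpos νneg : Measure X) : Prop :=
  (∀ K : Set X, IsCompact K → νpos K < ⊤ ∧ νneg K < ⊤) ∧
  ∀ φ, S.TestFun Ω φ → S.wLapVal Ω w f φ = (∫ x, φ x ∂νpos) - ∫ x, φ x ∂νneg

/-- `u` (with pointwise a.e. time derivative `ut = ∂ₜu`) is a locally weak solution of
the heat equation on `Ω × (0, T)` (`T ∈ (0,∞]`): for every geodesic ball `B_r` compactly
contained in `Ω`, every `0 < t₁ < t₂ < T` and every Lipschitz `φ` with compact support in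
`B_r × (t₁, t₂)`, `∫∫ (∂ₜu·φ + ⟨∇u, ∇φ⟩) dμ dt = 0`. -/
def IsWeakHeatSolution (S : SobolevCalculus X μ) (Ω : Set X) (T : ℝ≥0∞)
    (u ut : X → ℝ → ℝ) : Prop :=
  (∀ᵐ p ∂(μ.prod (volume : Measure ℝ)).restrict
      (Ω ×ˢ {t : ℝ | 0 < t ∧ ENNReal.ofReal t < T}),
    HasDerivAt (fun s => u p.1 s) (ut p.1 p.2) p.2) ∧
  ∀ (x₀ : X) (r : ℝ), 0 < r → closedBall x₀ r ⊆ Ω →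
  ∀ t₁ t₂ : ℝ, 0 < t₁ → t₁ < t₂ → ENNReal.ofReal t₂ < T →
  ∀ φ : X → ℝ → ℝ, (∃ L, LipschitzWith L (uncurry φ)) →
    IsCompact (tsupport (uncurry φ)) →
    tsupport (uncurry φ) ⊆ (ball x₀ r) ×ˢ Ioo t₁ t₂ →
    ∫ t in Ioo t₁ t₂, ∫ x in ball x₀ r,
      (ut x t * φ x t + S.Γ (ball x₀ r) (fun y => u y t) (fun y => φ y t) x) ∂μ = 0

end SobolevCalculus

/-- The Steklov average `u_h(x,t) = (1/h)∫₀ʰ u(x, t+τ) dτ`. -/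
def steklov {X : Type*} (u : X → ℝ → ℝ) (h : ℝ) (x : X) (t : ℝ) : ℝ :=
  (1 / h) * ∫ τ in (0:ℝ)..h, u x (t + τ)

/-- The Riemannian curvature-dimension condition `RCD*(K, N)` on the metric measure
space `(X, d, μ)`, encoded — via the equivalence of Erbar–Kuwada–Sturm and
Ambrosio–Mondino–Savaré — by a Sobolev calculus which is infinitesimally Hilbertian
(the Cheeger energy `f ↦ (1/2)∫|∇f|²dμ` is a quadratic form, i.e. satisfies the
parallelogram identity) and satisfies the (integrated, modified) Bakry–Émery–Bochner
inequality `BE(K, N)`. -/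
structure RCD (X : Type*) [MetricSpace X] [MeasurableSpace X] (μ : Measure X)
    (K N : ℝ) extends SobolevCalculus X μ where
  /-- infinitesimal Hilbertianity: the Cheeger energy is a quadratic form. -/
  hilbertian : ∀ f g : X → ℝ, f ∈ H1 Set.univ → g ∈ H1 Set.univ →
    (∫ x, Γ Set.univ (f + g) (f + g) x ∂μ) + (∫ x, Γ Set.univ (f - g) (f - g) x ∂μ)
      = 2 * (∫ x, Γ Set.univ f f x ∂μ) + 2 * (∫ x, Γ Set.univ g g x ∂μ)
  /-- the Cheeger energy is computed by the minimal relaxed gradient. -/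
  cheeger_eq : ∀ f : X → ℝ, f ∈ H1 Set.univ →
    cheegerEnergy μ f = (∫⁻ x, ENNReal.ofReal (Γ Set.univ f f x) ∂μ) / 2
  /-- `|∇f|² ∈ H¹(X)` whenever `ℒf = g ∈ L²∩L⁴`. -/
  gradSq_mem : ∀ f g : X → ℝ, f ∈ H1 Set.univ →
    toSobolevCalculus.IsLap Set.univ f g → MemLp g 2 μ → MemLp g 4 μ →
    Γ Set.univ f f ∈ H1 Set.univ
  /-- the modified Bochner inequality (the Bakry–Émery condition `BE(K, N)`). -/
  bochner : ∀ f g φ : X → ℝ, f ∈ H1 Set.univ →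
    toSobolevCalculus.IsLap Set.univ f g → MemLp g 2 μ → MemLp g 4 μ →
    φ ∈ H1 Set.univ → (∀ x, 0 ≤ φ x) → MemLp φ ⊤ μ →
    ∫ x, (-(1/2) * Γ Set.univ (Γ Set.univ f f) φ x
        + g x * Γ Set.univ f φ x + φ x * (g x) ^ 2) ∂μ
      ≥ ∫ x, (K * Γ Set.univ f f x + (g x) ^ 2 / N) * φ x ∂μ

end

/-- The standard cutoff function. -/
def cutoffFun {X : Type*} [MetricSpace X] (x₀ : X) (j : ℕ) (x : X) : ℝ :=
  max 0 (min 1 ((j : ℝ) + 1 - dist x x₀))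

section helpers

variable {X : Type*} [MetricSpace X]

lemma cutoffFun_nonneg (x₀ : X) (j : ℕ) (x : X) : 0 ≤ cutoffFun x₀ j x := le_max_left _ _

lemma cutoffFun_le_one (x₀ : X) (j : ℕ) (x : X) : cutoffFun x₀ j x ≤ 1 :=
  max_le zero_le_one (min_le_left _ _)

lemma cutoffFun_eq_one (x₀ : X) (j : ℕ) (x : X) (h : dist x x₀ ≤ j) : cutoffFun x₀ j x = 1 := by
  unfold cutoffFun
  rw [min_eq_left (by linarith), max_eq_right zero_le_one]

lemma cutoffFun_eq_zero (x₀ : X) (j : ℕ) (x : X) (h : (j : ℝ) + 1 ≤ dist x x₀) :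
    cutoffFun x₀ j x = 0 := by
  unfold cutoffFun
  exact max_eq_left ((min_le_right _ _).trans (by linarith))

lemma cutoffFun_lip (x₀ : X) (j : ℕ) (x y : X) :
    |cutoffFun x₀ j x - cutoffFun x₀ j y| ≤ dist x y := by
  have h1 := dist_triangle x y x₀
  have h2 := dist_triangle y x x₀
  rw [dist_comm y x] at h2
  have h3 : 0 ≤ dist x y := dist_nonneg
  unfold cutoffFun
  rw [abs_le]
  constructor <;>
  · rcases max_cases 0 (min 1 ((j : ℝ) + 1 - dist x x₀)) with h | h <;>
    rcases max_cases 0 (min 1 ((j : ℝ) + 1 - dist y x₀)) with h' | h' <;>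
    rcases min_cases 1 ((j : ℝ) + 1 - dist x x₀) with h'' | h'' <;>
    rcases min_cases 1 ((j : ℝ) + 1 - dist y x₀) with h''' | h''' <;>
    linarith

lemma cutoffFun_mul_lipschitz [ProperSpace X] (x₀ : X) (j : ℕ) (f : X → ℝ)
    (hf : LocallyLipschitz f) : ∃ L, LipschitzWith L (fun x => cutoffFun x₀ j x * f x) := by
  have hK : IsCompact (closedBall x₀ ((j : ℝ) + 1)) := isCompact_closedBall _ _
  obtain ⟨L, hL⟩ := (hf.locallyLipschitzOn (s := closedBall x₀ ((j : ℝ) + 1))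
    ).exists_lipschitzOnWith_of_compact hK
  obtain ⟨M, hM⟩ := hK.exists_bound_of_continuousOn hf.continuous.continuousOn
  have key : ∀ x y, x ∈ closedBall x₀ ((j : ℝ) + 1) →
      |cutoffFun x₀ j x * f x - cutoffFun x₀ j y * f y| ≤ (L + max M 0) * dist x y := by
    intro x y hx
    have hMx : |f x| ≤ max M 0 := (hM x hx).trans (le_max_left _ _)
    have hd : 0 ≤ dist x y := dist_nonneg
    have hc := cutoffFun_lip x₀ j x y
    have e : cutoffFun x₀ j x * f x - cutoffFun x₀ j y * f y =
      cutoffFun x₀ j y * (f x - f y) + (cutoffFun x₀ j x - cutoffFun x₀ j y) * f x := by ring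
    have h2 : |(cutoffFun x₀ j x - cutoffFun x₀ j y) * f x| ≤ dist x y * max M 0 := by
      rw [abs_mul]; gcongr
    have h1 : |cutoffFun x₀ j y * (f x - f y)| ≤ L * dist x y := by
      by_cases hy : y ∈ closedBall x₀ ((j : ℝ) + 1)
      · rw [abs_mul, abs_of_nonneg (cutoffFun_nonneg _ _ _)]
        have := hL.dist_le_mul x hx y hy
        rw [Real.dist_eq] at this
        calc _ ≤ 1 * |f x - f y| := by gcongr; exact cutoffFun_le_one _ _ _
          _ ≤ _ := by rwa [one_mul]
      · rw [mem_closedBall, not_le] at hy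
        rw [cutoffFun_eq_zero _ _ _ hy.le, zero_mul, abs_zero]
        positivity
    rw [e]
    calc _ ≤ _ := abs_add_le _ _
      _ ≤ _ := add_le_add h1 h2
      _ = _ := by ring
  refine ⟨L + ⟨max M 0, le_max_right _ _⟩, LipschitzWith.of_dist_le_mul fun x y => ?_⟩
  rw [Real.dist_eq]
  change _ ≤ ((L : ℝ) + max M 0) * dist x y
  by_cases hx : x ∈ closedBall x₀ ((j : ℝ) + 1)
  · exact key x y hx
  by_cases hy : y ∈ closedBall x₀ ((j : ℝ) + 1)
  · rw [abs_sub_comm, dist_comm]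
    exact key y x hy
  rw [mem_closedBall, not_le] at hx hy
  rw [cutoffFun_eq_zero _ _ _ hx.le, cutoffFun_eq_zero _ _ _ hy.le]
  simp only [zero_mul, sub_zero, abs_zero]
  positivity

lemma cutoffFun_mul_compact [ProperSpace X] (x₀ : X) (j : ℕ) (f : X → ℝ) :
    IsCompact (tsupport (fun x => cutoffFun x₀ j x * f x)) := by
  refine (isCompact_closedBall x₀ ((j : ℝ) + 1)).of_isClosed_subset (isClosed_tsupport _) ?_
  refine closure_minimal ?_ isClosed_closedBall
  intro x hx
  by_contra h
  rw [mem_closedBall, not_le] at h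
  exact hx (by simp [cutoffFun_eq_zero _ _ _ h.le])

lemma lipConst_bdd (f : X → ℝ) (hf : LocallyLipschitz f) (x : X) :
    (nhdsWithin x {x}ᶜ).IsBoundedUnder (· ≤ ·) (fun y => |f y - f x| / dist y x) := by
  obtain ⟨L, t, ht, hL⟩ := hf x
  refine ⟨L, ?_⟩
  rw [eventually_map]
  filter_upwards [mem_nhdsWithin_of_mem_nhds ht] with y hy
  have := hL.dist_le_mul y hy x (mem_of_mem_nhds ht)
  rw [Real.dist_eq] at this
  exact div_le_of_le_mul₀ dist_nonneg L.2 this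

lemma lipConst_cobdd (f : X → ℝ) (x : X) [(nhdsWithin x {x}ᶜ).NeBot] :
    (nhdsWithin x {x}ᶜ).IsCoboundedUnder (· ≤ ·) (fun y => |f y - f x| / dist y x) :=
  IsBoundedUnder.isCoboundedUnder_le
    ⟨0, by rw [eventually_map]; exact Eventually.of_forall fun y => by positivity⟩

lemma lipConst_nonneg' (f : X → ℝ) (hf : LocallyLipschitz f) (x : X) : 0 ≤ lipConst f x := by
  unfold lipConst
  rcases (nhdsWithin x {x}ᶜ).eq_or_neBot with h | h
  · rw [h]; simp [limsup, limsSup]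
  · exact le_limsup_of_frequently_le (Eventually.of_forall fun y => by positivity).frequently
      (lipConst_bdd f hf x)

/-- The remainder after cutoff. -/
lemma lipConst_sub_cutoff_le (x₀ : X) (j : ℕ) (f : X → ℝ) (hf : LocallyLipschitz f) (x : X) :
    lipConst (f - fun x => cutoffFun x₀ j x * f x) x ≤ lipConst f x + |f x| := by
  rcases (nhdsWithin x {x}ᶜ).eq_or_neBot with h | h
  · unfold lipConst; rw [h]; simp [limsup, limsSup]
  · unfold lipConst
    rw [← limsup_add_const _ _ _ (lipConst_bdd f hf x) (lipConst_cobdd f x)]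
    refine limsup_le_limsup ?_ (lipConst_cobdd _ x) ?_
    · filter_upwards [self_mem_nhdsWithin] with y hy
      have hd : 0 < dist y x := dist_pos.2 hy
      rw [div_add' _ _ _ hd.ne']
      gcongr
      have e : (f - fun x => cutoffFun x₀ j x * f x) y - (f - fun x => cutoffFun x₀ j x * f x) x
        = (1 - cutoffFun x₀ j y) * (f y - f x) + f x * -(cutoffFun x₀ j y - cutoffFun x₀ j x) := by
        simp only [Pi.sub_apply]; ring
      rw [e]
      refine (abs_add_le _ _).trans (add_le_add ?_ ?_)
      · rw [abs_mul]
        refine mul_le_of_le_one_left (abs_nonneg _) ?_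
        rw [abs_le]
        constructor <;> linarith [cutoffFun_nonneg x₀ j y, cutoffFun_le_one x₀ j y]
      · rw [abs_mul, abs_neg]
        gcongr
        exact cutoffFun_lip _ _ _ _
    · obtain ⟨b, hb⟩ := lipConst_bdd f hf x
      rw [eventually_map] at hb
      exact ⟨b + |f x|, by rw [eventually_map]; filter_upwards [hb] with y hy; linarith⟩

lemma lipConst_sub_cutoff_eq_zero (x₀ : X) (j : ℕ) (f : X → ℝ) (x : X)
    (hx : x ∈ ball x₀ (j : ℝ)) :
    lipConst (f - fun x => cutoffFun x₀ j x * f x) x = 0 := by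
  unfold lipConst
  have : ∀ᶠ y in nhdsWithin x {x}ᶜ, |(f - fun x => cutoffFun x₀ j x * f x) y -
      (f - fun x => cutoffFun x₀ j x * f x) x| / dist y x = 0 := by
    filter_upwards [mem_nhdsWithin_of_mem_nhds (isOpen_ball.mem_nhds hx)] with y hy
    rw [mem_ball] at hx hy
    simp [cutoffFun_eq_one _ _ _ hx.le, cutoffFun_eq_one _ _ _ hy.le]
  rw [limsup_congr this]
  rcases (nhdsWithin x {x}ᶜ).eq_or_neBot with h | h
  · rw [h]; simp [limsup, limsSup]
  · exact limsup_const 0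

lemma tendsto_eLpNorm_indicator_compl_ball [MeasurableSpace X] [BorelSpace X] (μ : Measure X)
    (p : ℝ≥0∞) (hp0 : p ≠ 0) (hp2 : p ≠ ⊤) (x₀ : X) (h : X → ℝ) (hh : MemLp h p μ) :
    Tendsto (fun j : ℕ => eLpNorm ((ball x₀ (j : ℝ))ᶜ.indicator h) p μ) atTop (nhds 0) := by
  have hpr := ENNReal.toReal_pos hp0 hp2
  simp_rw [eLpNorm_eq_lintegral_rpow_enorm_toReal hp0 hp2]
  have key : Tendsto (fun j : ℕ => ∫⁻ x, ‖(ball x₀ (j : ℝ))ᶜ.indicator h x‖ₑ ^ p.toReal ∂μ)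
      atTop (nhds (∫⁻ _, 0 ∂μ)) := by
    refine tendsto_lintegral_of_dominated_convergence' (fun x => ‖h x‖ₑ ^ p.toReal) ?_ ?_
      (lintegral_rpow_enorm_lt_top_of_eLpNorm_lt_top hp0 hp2 hh.2).ne ?_
    · intro n
      exact (hh.1.indicator measurableSet_ball.compl).enorm.pow_const _
    · intro n
      refine Eventually.of_forall fun x => ?_
      dsimp only
      gcongr
      exact enorm_indicator_le_enorm_self _ _
    · refine Eventually.of_forall fun x => ?_
      obtain ⟨n, hn⟩ := exists_nat_gt (dist x x₀)
      refine tendsto_const_nhds.congr' ?_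
      filter_upwards [eventually_ge_atTop n] with m hm
      have : x ∈ ball x₀ (m : ℝ) := by
        rw [mem_ball]; exact hn.trans_le (by exact_mod_cast hm)
      simp [this, hpr]
  rw [lintegral_zero] at key
  have h2 := (ENNReal.continuous_rpow_const (y := 1 / p.toReal)).tendsto 0
  rw [ENNReal.zero_rpow_of_pos (by positivity)] at h2
  exact h2.comp key

end helpers

/-- **Lemma 2.5(i): `W^{1,p}(X) = W^{1,p}₀(X)`.** On an `RCD*(K, N)` space, for any
`1 < p < ∞`, Lipschitz functions with compact support are dense in `W^{1,p}(X)`: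
every locally Lipschitz `f` with finite `W^{1,p}`-norm is approximated, in the
`W^{1,p}`-norm `‖·‖_{L^p} + ‖Lip(·)‖_{L^p}`, by compactly supported Lipschitz functions.
(Since `W^{1,p}(X)` is by definition the closure of such `f`, this is exactly the
statement `W^{1,p}(X) = W^{1,p}₀(X)`.) -/
theorem W1p_eq_W1p0
    {X : Type*} [MetricSpace X] [MeasurableSpace X] [BorelSpace X]
    [CompleteSpace X] [ProperSpace X]
    (μ : Measure X) [μ.IsOpenPosMeasure] [IsLocallyFiniteMeasure μ]
    (K N : ℝ) (hN : 1 ≤ N) (S : RCD X μ K N)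
    (p : ℝ≥0∞) (hp1 : 1 < p) (hp2 : p < ⊤)
    (f : X → ℝ) (hlip : LocallyLipschitz f)
    (hfp : MemLp f p μ) (hlf : MemLp (lipConst f) p μ) :
    ∃ g : ℕ → X → ℝ,
      (∀ j, (∃ L, LipschitzWith L (g j)) ∧ IsCompact (tsupport (g j))) ∧
      Tendsto (fun j => eLpNorm (f - g j) p μ + eLpNorm (lipConst (f - g j)) p μ)
        atTop (nhds 0) := by
  rcases isEmpty_or_nonempty X with hX | ⟨⟨x₀⟩⟩
  · refine ⟨fun _ => 0, fun j => ⟨⟨0, LipschitzWith.const 0⟩, (Set.toFinite _).isCompact⟩, ?_⟩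
    simp [Measure.eq_zero_of_isEmpty μ]
  have hp0 : p ≠ 0 := (zero_lt_one.trans hp1).ne'
  refine ⟨fun j x => cutoffFun x₀ j x * f x, fun j =>
    ⟨cutoffFun_mul_lipschitz x₀ j f hlip, cutoffFun_mul_compact x₀ j f⟩, ?_⟩
  have t1 := tendsto_eLpNorm_indicator_compl_ball μ p hp0 hp2.ne x₀ f hfp
  have t2 := tendsto_eLpNorm_indicator_compl_ball μ p hp0 hp2.ne x₀ _ (hlf.add hfp.norm)
  have t := t1.add t2
  rw [add_zero] at t
  refine tendsto_of_tendsto_of_tendsto_of_le_of_le tendsto_const_nhds t (fun _ => zero_le) ?_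
  intro j
  refine add_le_add (eLpNorm_mono fun x => ?_) (eLpNorm_mono_real fun x => ?_)
  · by_cases hx : x ∈ ball x₀ (j : ℝ)
    · have := cutoffFun_eq_one x₀ j x (le_of_lt hx)
      simp [this]
    · rw [indicator_of_mem (by exact hx)]
      have e : (f - fun x => cutoffFun x₀ j x * f x) x = (1 - cutoffFun x₀ j x) * f x := by
        simp only [Pi.sub_apply]; ring
      rw [e, norm_mul]
      refine mul_le_of_le_one_left (norm_nonneg _) ?_
      rw [Real.norm_eq_abs, abs_le]
      constructor <;> linarith [cutoffFun_nonneg x₀ j x, cutoffFun_le_one x₀ j x]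
  · by_cases hx : x ∈ ball x₀ (j : ℝ)
    · rw [lipConst_sub_cutoff_eq_zero x₀ j f x hx]
      simp [hx]
    · rw [indicator_of_mem (by exact hx)]
      obtain ⟨L, hL⟩ := cutoffFun_mul_lipschitz x₀ j f hlip
      rw [Real.norm_eq_abs, abs_of_nonneg]
      · exact lipConst_sub_cutoff_le x₀ j f hlip x
      · exact lipConst_nonneg' _ (hlip.sub hL.locallyLipschitz) x
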